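/- Let f be an expansive homeomorphism of a compact metric space (M,d) with expansivity constant ξ, where d is self-similar for f with expanding factor λ > 1 and constant ξ. Then there is δ > 0 such that for any critical triangle (x,y,z) with d(x,y) < δ one has d(z,y)/d(x,y) ≤ 2. -/

import Mathlib

open Filter Topology

/-!
Write `a`, `b`, `c` for the distances `d(x, z)`, `d(z, y)`, `d(x, y)`. Along backward iterates the
side `xz` contracts, since `z` is on the unstable set of `x`, while `zy` and `xy` expand: after `n`
steps the sides are `λ⁻ⁿ a`, `λⁿ b`, `λⁿ c`, as long as they stay below `ξ`. The triangle inequality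
at time `-n` reads `λⁿ b ≤ λⁿ c + λ⁻ⁿ a`, and `a ≤ b + c` at time `0`, so
`b / c ≤ (λ²ⁿ + 1) / (λ²ⁿ - 1)`, which is as close to `1` as we like for `n` large. How large an `n`
is admissible depends only on how small `c` is.
-/

/-- The metric is self-similar for `f` with expanding factor `lam` and constant `ξ`: at scales up
to `ξ`, the larger of the distances between the images under `f` and under `f⁻¹` is exactly `lam`
times the original one. -/
def IsSelfSimilar {M : Type*} [PseudoMetricSpace M] (f : Equiv.Perm M) (lam ξ : ℝ) : Prop :=
  ∀ p q : M, dist p q ≤ ξ →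
    max (dist (f p) (f q)) (dist (f.symm p) (f.symm q)) = lam * dist p q

/-- The local stable set `W^s_ε(x)` of `f`. The local unstable set `W^u_ε(x)` of `f` is
`localStableSet f.symm ε x`. -/
def localStableSet {M : Type*} [PseudoMetricSpace M] (f : Equiv.Perm M) (ε : ℝ) (x : M) : Set M :=
  {y | ∀ n : ℕ, dist ((f ^ n) x) ((f ^ n) y) ≤ ε}

section

variable {M : Type*} [PseudoMetricSpace M] {f : Equiv.Perm M} {lam ξ ε : ℝ} {p q x y z : M} {n : ℕ}

theorem localStableSet_mono {ε' : ℝ} (hε : ε ≤ ε') (x : M) :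
    localStableSet f ε x ⊆ localStableSet f ε' x :=
  fun _ hy n => (hy n).trans hε

theorem apply_mem_localStableSet (hq : q ∈ localStableSet f ε p) :
    f q ∈ localStableSet f ε (f p) := fun n => by
  simpa only [pow_succ, Equiv.Perm.mul_apply] using hq (n + 1)

namespace IsSelfSimilar

theorem symm (h : IsSelfSimilar f lam ξ) : IsSelfSimilar f.symm lam ξ :=
  fun p q hpq => (max_comm _ _).trans (h p q hpq)

theorem dist_apply_le (h : IsSelfSimilar f lam ξ) (hpq : dist p q ≤ ξ) :
    dist (f p) (f q) ≤ lam * dist p q :=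
  (le_max_left _ _).trans_eq (h p q hpq)

theorem expands_apply (h : IsSelfSimilar f lam ξ) (hlam : 1 < lam)
    (hexpands : dist (f p) (f q) = lam * dist p q) (hξ : dist (f p) (f q) ≤ ξ) :
    dist (f (f p)) (f (f q)) = lam * dist (f p) (f q) := by
  refine (h.dist_apply_le hξ).antisymm (not_lt.1 fun hlt => ?_)
  have hback : dist p q = lam * (lam * dist p q) := by
    have hmax := h (f p) (f q) hξ
    rw [Equiv.symm_apply_apply, Equiv.symm_apply_apply] at hmax
    rcases max_choice (dist (f (f p)) (f (f q))) (dist p q) with hfst | hsnd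
    · exact absurd (hfst.symm.trans hmax) hlt.ne
    · rw [← hexpands, ← hmax, hsnd]
  have hpos : 0 < dist p q := by
    rw [hexpands, ← hback] at hlt
    exact dist_nonneg.trans_lt hlt
  have hgrow : dist p q < lam * dist p q := lt_mul_of_one_lt_left hpos hlam
  exact (hgrow.trans (lt_mul_of_one_lt_left (hpos.trans hgrow) hlam)).ne hback

theorem expands_pow (h : IsSelfSimilar f lam ξ) (hlam : 1 < lam)
    (hexpands : dist (f p) (f q) = lam * dist p q)
    (hξ : ∀ k ≤ n, dist ((f ^ k) p) ((f ^ k) q) ≤ ξ) :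
    dist ((f ^ (n + 1)) p) ((f ^ (n + 1)) q) = lam * dist ((f ^ n) p) ((f ^ n) q) := by
  induction n with
  | zero => simpa using hexpands
  | succ n ih =>
    have hprev := ih fun k hk => hξ k (Nat.le_succ_of_le hk)
    have hbound := hξ (n + 1) le_rfl
    simp only [pow_succ' f, Equiv.Perm.mul_apply] at hprev hbound ⊢
    exact h.expands_apply hlam hprev hbound

theorem dist_pow_apply (h : IsSelfSimilar f lam ξ) (hlam : 1 < lam)
    (hexpands : dist (f p) (f q) = lam * dist p q)
    (hξ : ∀ k < n, dist ((f ^ k) p) ((f ^ k) q) ≤ ξ) :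
    dist ((f ^ n) p) ((f ^ n) q) = lam ^ n * dist p q := by
  induction n with
  | zero => simp
  | succ n ih =>
    rw [h.expands_pow hlam hexpands fun k hk => hξ k (Nat.lt_succ_of_le hk),
      ih fun k hk => hξ k (Nat.lt_succ_of_lt hk), pow_succ', mul_assoc]

theorem dist_pow_apply_of_pow_mul_dist_le (h : IsSelfSimilar f lam ξ) (hlam : 1 < lam)
    (hexpands : dist (f p) (f q) = lam * dist p q) (hξ : lam ^ n * dist p q ≤ ξ) :
    dist ((f ^ n) p) ((f ^ n) q) = lam ^ n * dist p q := by
  induction n using Nat.strong_induction_on with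
  | _ n ih =>
    refine h.dist_pow_apply hlam hexpands fun k hk => ?_
    have hk_le : lam ^ k * dist p q ≤ ξ :=
      (mul_le_mul_of_nonneg_right (pow_le_pow_right₀ hlam.le hk.le) dist_nonneg).trans hξ
    exact (ih k hk hk_le).trans_le hk_le

theorem dist_eq_zero_of_expands (h : IsSelfSimilar f lam ξ) (hlam : 1 < lam)
    (hq : q ∈ localStableSet f ξ p) (hexpands : dist (f p) (f q) = lam * dist p q) :
    dist p q = 0 := by
  by_contra hne
  have hpos : 0 < dist p q := dist_nonneg.lt_of_ne' hne
  obtain ⟨n, hn⟩ := pow_unbounded_of_one_lt (ξ / dist p q) hlam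
  rw [div_lt_iff₀ hpos, ← h.dist_pow_apply hlam hexpands fun k _ => hq k] at hn
  exact (hq n).not_gt hn

theorem dist_symm_apply_of_mem_localStableSet (h : IsSelfSimilar f lam ξ) (hlam : 1 < lam)
    (hq : q ∈ localStableSet f ξ p) :
    dist (f.symm p) (f.symm q) = lam * dist p q := by
  have hpq : dist p q ≤ ξ := hq 0
  rcases max_choice (dist (f p) (f q)) (dist (f.symm p) (f.symm q)) with hforward | hbackward
  · have hzero : dist p q = 0 :=
      h.dist_eq_zero_of_expands hlam hq (hforward.symm.trans (h p q hpq))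
    refine (h.symm.dist_apply_le hpq).antisymm ?_
    rw [hzero, mul_zero]
    exact dist_nonneg
  · exact hbackward.symm.trans (h p q hpq)

theorem pow_mul_dist_pow_apply_of_mem_localStableSet (h : IsSelfSimilar f lam ξ) (hlam : 1 < lam)
    (hq : q ∈ localStableSet f ξ p) (n : ℕ) :
    lam ^ n * dist ((f ^ n) p) ((f ^ n) q) = dist p q := by
  induction n generalizing p q with
  | zero => simp
  | succ n ih =>
    have hfq := apply_mem_localStableSet hq
    have hcontract := h.dist_symm_apply_of_mem_localStableSet hlam hfq
    rw [Equiv.symm_apply_apply, Equiv.symm_apply_apply] at hcontract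
    rw [hcontract, ← ih hfq, pow_succ' lam, mul_assoc]
    simp only [pow_succ f, Equiv.Perm.mul_apply]

theorem pow_mul_dist_le_of_triangle (h : IsSelfSimilar f lam ξ) (hlam : 1 < lam)
    (hzx : z ∈ localStableSet f.symm ε x) (hzy : z ∈ localStableSet f ξ y)
    (hxy : dist (f.symm x) (f.symm y) = lam * dist x y) (hn : lam ^ n * dist x y + ε ≤ ξ) :
    lam ^ n * dist z y ≤
      lam ^ n * dist x y + dist ((f.symm ^ n) x) ((f.symm ^ n) z) := by
  have hε : 0 ≤ ε := dist_nonneg.trans (hzx 0)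
  have hside : ∀ k ≤ n, lam ^ k * dist x y ≤ lam ^ n * dist x y := fun k hk =>
    mul_le_mul_of_nonneg_right (pow_le_pow_right₀ hlam.le hk) dist_nonneg
  have htriangle : ∀ k ≤ n, dist ((f.symm ^ k) z) ((f.symm ^ k) y) ≤
      lam ^ k * dist x y + dist ((f.symm ^ k) x) ((f.symm ^ k) z) := fun k hk => by
    rw [← h.symm.dist_pow_apply_of_pow_mul_dist_le hlam hxy (by linarith [hside k hk]), add_comm]
    exact dist_triangle_left _ _ _
  have hexpands : dist (f.symm z) (f.symm y) = lam * dist z y := by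
    simpa only [dist_comm] using h.dist_symm_apply_of_mem_localStableSet hlam hzy
  rw [← h.symm.dist_pow_apply hlam hexpands fun k hk => by
    linarith [htriangle k hk.le, hside k hk.le, hzx k]]
  exact htriangle n le_rfl

theorem sub_one_mul_dist_le_of_triangle (h : IsSelfSimilar f lam ξ) (hlam : 1 < lam)
    (hzx : z ∈ localStableSet f.symm ε x) (hzy : z ∈ localStableSet f ξ y)
    (hxy : dist (f.symm x) (f.symm y) = lam * dist x y) (hn : lam ^ n * dist x y + ε ≤ ξ) :
    ((lam ^ n) ^ 2 - 1) * dist z y ≤ ((lam ^ n) ^ 2 + 1) * dist x y := by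
  have hpow : 0 < lam ^ n := pow_pos (one_pos.trans hlam) n
  have hεξ : ε ≤ ξ := by nlinarith [dist_nonneg (x := x) (y := y)]
  have hcontract : lam ^ n * dist ((f.symm ^ n) x) ((f.symm ^ n) z) = dist x z :=
    h.symm.pow_mul_dist_pow_apply_of_mem_localStableSet hlam (localStableSet_mono hεξ x hzx) n
  have hscaled : (lam ^ n) ^ 2 * dist z y ≤ (lam ^ n) ^ 2 * dist x y + dist x z := by
    rw [← hcontract, pow_two, mul_assoc, mul_assoc, ← mul_add]
    exact mul_le_mul_of_nonneg_left (h.pow_mul_dist_le_of_triangle hlam hzx hzy hxy hn) hpow.le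
  linarith [dist_triangle_right x z y]

end IsSelfSimilar

end

theorem exists_add_one_le_mul_pow_sq_sub_one {lam C : ℝ} (hlam : 1 < lam) (hC : 1 < C) :
    ∃ n : ℕ, 1 < (lam ^ n) ^ 2 ∧ (lam ^ n) ^ 2 + 1 ≤ C * ((lam ^ n) ^ 2 - 1) := by
  obtain ⟨n, hn⟩ := pow_unbounded_of_one_lt ((C + 1) / (C - 1)) (one_lt_pow₀ hlam two_ne_zero)
  rw [pow_right_comm, div_lt_iff₀ (sub_pos.2 hC)] at hn
  exact ⟨n, by nlinarith, by linarith⟩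

theorem stmt_7_general {M : Type*} [PseudoMetricSpace M] {f : Equiv.Perm M} {lam ξ ε C : ℝ}
    (h : IsSelfSimilar f lam ξ) (hlam : 1 < lam) (hε : ε < ξ) (hC : 1 < C) :
    ∃ δ > (0 : ℝ), ∀ x y z : M, z ∈ localStableSet f.symm ε x → z ∈ localStableSet f ξ y →
      dist (f.symm x) (f.symm y) = lam * dist x y → dist x y < δ →
      dist z y ≤ C * dist x y := by
  obtain ⟨n, hone, hratio⟩ := exists_add_one_le_mul_pow_sq_sub_one hlam hC
  have hpow : 0 < lam ^ n := pow_pos (one_pos.trans hlam) n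
  refine ⟨(ξ - ε) / lam ^ n, div_pos (sub_pos.2 hε) hpow, fun x y z hzx hzy hxy hδ => ?_⟩
  have hn : lam ^ n * dist x y + ε ≤ ξ := by
    rw [lt_div_iff₀' hpow] at hδ
    linarith
  refine le_of_mul_le_mul_left ?_ (sub_pos.2 hone)
  calc ((lam ^ n) ^ 2 - 1) * dist z y
      ≤ ((lam ^ n) ^ 2 + 1) * dist x y := h.sub_one_mul_dist_le_of_triangle hlam hzx hzy hxy hn
    _ ≤ C * ((lam ^ n) ^ 2 - 1) * dist x y := mul_le_mul_of_nonneg_right hratio dist_nonneg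
    _ = ((lam ^ n) ^ 2 - 1) * (C * dist x y) := by ring

theorem stmt_7 {M : Type*} [MetricSpace M] [CompactSpace M]
    (f : Equiv.Perm M) (hf : Continuous f) (hf' : Continuous f.symm)
    (ξ lam : ℝ) (hξ : 0 < ξ) (hlam : 1 < lam)
    (hexp : ∀ x y : M, x ≠ y → ∃ n : ℤ, ξ < dist ((f ^ n) x) ((f ^ n) y))
    (hss : ∀ p q : M, dist p q ≤ ξ →
      max (dist (f p) (f q)) (dist (f.symm p) (f.symm q)) = lam * dist p q) :
    ∃ δ > (0 : ℝ), ∀ x y z : M,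
      (∀ n : ℕ, dist ((f.symm ^ n) x) ((f.symm ^ n) z) ≤ ξ / (2 * lam)) →
      (∀ n : ℕ, dist ((f ^ n) y) ((f ^ n) z) ≤ ξ / (2 * lam)) →
      0 < dist x y → dist x y < ξ →
      dist (f.symm x) (f.symm y) = lam * dist x y →
      dist (f (f x)) (f (f y)) = lam * dist (f x) (f y) →
      dist x y < δ →
      dist z y / dist x y ≤ 2 := by
  have hε : ξ / (2 * lam) < ξ := div_lt_self hξ (by linarith)
  obtain ⟨δ, hδ, hratio⟩ := stmt_7_general hss hlam hε one_lt_two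
  exact ⟨δ, hδ, fun x y z hzx hzy hpos _ hxy _ hlt =>
    (div_le_iff₀ hpos).2 (hratio x y z hzx (localStableSet_mono hε.le y hzy) hxy hlt)⟩
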